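/- arXiv:2510.27396 — 4 statements merged into one kernel-verified Lean document; each statement's English description precedes it below -/
import Mathlib

section
/- Let f : ℝ^{n_x} → ℝ and g : ℝ^{n_x̄} → ℝ, and define the augmented Lagrangian L(x, x̄, z, y) = f(x) + g(x̄) + yᵀ(Ax + Bx̄ + z − b) + (ρ/2)‖Ax + Bx̄ + z − b‖² + λᵀz + (β/2)‖z‖². Fix x, x̄, z, y with λ + β·z + y = 0, let s = Ax + Bx̄ − b, and let z⁺ = −(ρ/(ρ+β))·(s + y/ρ) − (1/(ρ+β))·λ and y⁺ = y + ρ·(s + z⁺). Then L(x, x̄, z⁺, y⁺) − L(x, x̄, z, y) ≤ −(ρ/2 − β²/ρ)·‖z⁺ − z‖². -/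
open RealInnerProductSpace

/-!
Write `d = z⁺ - z`. As a function of `z` alone, the augmented Lagrangian is a quadratic with Hessian
`(ρ + β) I` and stationary point `z⁺`, so the `z`-update changes it by exactly
`-(ρ + β) / 2 * ‖d‖²`. The dual update then adds `ρ ‖s + z⁺‖²`. Stationarity of `z⁺` reads
`λ + βz⁺ + y⁺ = 0`; subtracting `λ + βz + y = 0` gives `ρ (s + z⁺) = y⁺ - y = -β d`, so this
change is `(β² / ρ) ‖d‖²`.
-/

section SlackLagrangian

variable {E : Type*} [NormedAddCommGroup E] [InnerProductSpace ℝ E]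

/-- The part of the augmented Lagrangian that depends on the slack `z` and the multiplier `y` when
the primal variables are fixed; these enter only through the residual `s = Ax + Bx̄ - b`. -/
noncomputable def slackLagrangian (ρ β : ℝ) (lam s z y : E) : ℝ :=
  ⟪y, s + z⟫ + ρ / 2 * ‖s + z‖ ^ 2 + ⟪lam, z⟫ + β / 2 * ‖z‖ ^ 2

/-- The closed-form `z`-update of the inner ADMM iteration, for the residual `s = Ax + Bx̄ - b`.
Where `ρ` or `ρ + β` vanishes its value is junk. -/
noncomputable def zUpdate (ρ β : ℝ) (lam s y : E) : E :=
  -((ρ / (ρ + β)) • (s + ρ⁻¹ • y)) - (ρ + β)⁻¹ • lam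

variable {ρ β : ℝ} {lam s z zp y : E}

theorem slackLagrangian_add_slack (ρ β : ℝ) (lam s z d y : E) :
    slackLagrangian ρ β lam s (z + d) y =
      slackLagrangian ρ β lam s z y + ⟪lam + β • z + (y + ρ • (s + z)), d⟫ +
        (ρ + β) / 2 * ‖d‖ ^ 2 := by
  simp only [slackLagrangian, ← add_assoc s z d, norm_add_sq_real (s + z) d,
    norm_add_sq_real z d, inner_add_left _ _ d, inner_add_right _ _ d, real_inner_smul_left]
  ring

theorem slackLagrangian_sub_of_stationary (hzp : lam + β • zp + (y + ρ • (s + zp)) = 0) (z : E) :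
    slackLagrangian ρ β lam s zp y - slackLagrangian ρ β lam s z y =
      -((ρ + β) / 2) * ‖zp - z‖ ^ 2 := by
  have expansion := slackLagrangian_add_slack ρ β lam s zp (z - zp) y
  rw [add_sub_cancel, hzp, inner_zero_left, norm_sub_rev] at expansion
  linarith

theorem slackLagrangian_dual_ascent_sub (ρ β : ℝ) (lam s z y : E) :
    slackLagrangian ρ β lam s z (y + ρ • (s + z)) - slackLagrangian ρ β lam s z y =
      ρ * ‖s + z‖ ^ 2 := by
  simp only [slackLagrangian, inner_add_left y, real_inner_smul_left, real_inner_self_eq_norm_sq]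
  ring

theorem zUpdate_stationary (hρ : ρ ≠ 0) (hρβ : ρ + β ≠ 0) (lam s y : E) :
    lam + β • zUpdate ρ β lam s y + (y + ρ • (s + zUpdate ρ β lam s y)) = 0 := by
  have scaled : (ρ + β) • zUpdate ρ β lam s y = -(ρ • s + y) - lam := by
    rw [zUpdate]
    match_scalars <;> field_simp
  calc lam + β • zUpdate ρ β lam s y + (y + ρ • (s + zUpdate ρ β lam s y))
      = (ρ + β) • zUpdate ρ β lam s y + (ρ • s + y) + lam := by module
    _ = 0 := by rw [scaled]; abel

theorem residual_eq_smul_slack_sub (hρ : ρ ≠ 0) (hz : lam + β • z + y = 0)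
    (hzp : lam + β • zp + (y + ρ • (s + zp)) = 0) :
    s + zp = -(β / ρ) • (zp - z) := by
  have dual_step : ρ • (s + zp) = -β • (zp - z) := by
    linear_combination (norm := module) hzp - hz
  rw [← inv_smul_smul₀ hρ (s + zp), dual_step, smul_smul]
  congr 1
  ring

theorem slackLagrangian_zUpdate_dual_ascent_sub (hρ : ρ ≠ 0) (hρβ : ρ + β ≠ 0)
    (hdual : lam + β • z + y = 0) (hzp : zp = zUpdate ρ β lam s y) :
    slackLagrangian ρ β lam s zp (y + ρ • (s + zp)) - slackLagrangian ρ β lam s z y =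
      -((ρ + β) / 2 - β ^ 2 / ρ) * ‖zp - z‖ ^ 2 := by
  have stationary : lam + β • zp + (y + ρ • (s + zp)) = 0 :=
    hzp ▸ zUpdate_stationary hρ hρβ lam s y
  have z_step := slackLagrangian_sub_of_stationary stationary z
  have y_step : slackLagrangian ρ β lam s zp (y + ρ • (s + zp)) - slackLagrangian ρ β lam s zp y =
      β ^ 2 / ρ * ‖zp - z‖ ^ 2 := by
    rw [slackLagrangian_dual_ascent_sub, residual_eq_smul_slack_sub hρ hdual stationary, norm_smul,
      mul_pow, Real.norm_eq_abs, sq_abs]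
    field_simp
  linear_combination z_step + y_step

theorem z_y_update_decrease_general {X Y : Type*} {f : X → ℝ} {g : Y → ℝ} {A : X → E} {B : Y → E}
    {b : E} (hρ : ρ ≠ 0) (hρβ : ρ + β ≠ 0) {L : X → Y → E → E → ℝ}
    (hL : ∀ x xbar z y, L x xbar z y =
      f x + g xbar + ⟪y, A x + B xbar + z - b⟫ +
        (ρ / 2) * ‖A x + B xbar + z - b‖ ^ 2 + ⟪lam, z⟫ + (β / 2) * ‖z‖ ^ 2)
    {x : X} {xbar : Y} (hdual : lam + β • z + y = 0) (hs : s = A x + B xbar - b)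
    (hzp : zp = zUpdate ρ β lam s y) {yp : E} (hyp : yp = y + ρ • (s + zp)) :
    L x xbar zp yp - L x xbar z y = -((ρ + β) / 2 - β ^ 2 / ρ) * ‖zp - z‖ ^ 2 := by
  have L_eq (z y : E) : L x xbar z y = f x + g xbar + slackLagrangian ρ β lam s z y := by
    rw [hL, slackLagrangian, hs, sub_add_eq_add_sub]
    ring
  rw [L_eq, L_eq, add_sub_add_left_eq_sub, hyp]
  exact slackLagrangian_zUpdate_dual_ascent_sub hρ hρβ hdual hzp

end SlackLagrangian

/-- Under the dual-slack identity `λ + βz + y = 0`, the z- and y-updates of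
the inner ADMM iteration decrease the augmented Lagrangian by at least
`(ρ/2 − β²/ρ)‖z⁺ − z‖²`. -/
theorem z_y_update_decrease {nx nxb m : ℕ}
    (f : EuclideanSpace ℝ (Fin nx) → ℝ) (g : EuclideanSpace ℝ (Fin nxb) → ℝ)
    (A : EuclideanSpace ℝ (Fin nx) →L[ℝ] EuclideanSpace ℝ (Fin m))
    (B : EuclideanSpace ℝ (Fin nxb) →L[ℝ] EuclideanSpace ℝ (Fin m))
    (b : EuclideanSpace ℝ (Fin m)) (lam : EuclideanSpace ℝ (Fin m))
    (ρ β : ℝ) (hρ : 0 < ρ) (hβ : 0 < β)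
    (L : EuclideanSpace ℝ (Fin nx) → EuclideanSpace ℝ (Fin nxb) →
      EuclideanSpace ℝ (Fin m) → EuclideanSpace ℝ (Fin m) → ℝ)
    (hL : ∀ x xbar z y, L x xbar z y =
      f x + g xbar + ⟪y, A x + B xbar + z - b⟫ +
        (ρ / 2) * ‖A x + B xbar + z - b‖ ^ 2 + ⟪lam, z⟫ + (β / 2) * ‖z‖ ^ 2)
    (x : EuclideanSpace ℝ (Fin nx)) (xbar : EuclideanSpace ℝ (Fin nxb))
    (z y : EuclideanSpace ℝ (Fin m))
    (hdual : lam + β • z + y = 0)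
    (s : EuclideanSpace ℝ (Fin m)) (hs : s = A x + B xbar - b)
    (zp : EuclideanSpace ℝ (Fin m))
    (hzp : zp = -((ρ / (ρ + β)) • (s + ρ⁻¹ • y)) - (ρ + β)⁻¹ • lam)
    (yp : EuclideanSpace ℝ (Fin m))
    (hyp : yp = y + ρ • (s + zp)) :
    L x xbar zp yp - L x xbar z y ≤ -(ρ / 2 - β ^ 2 / ρ) * ‖zp - z‖ ^ 2 := by
  rw [z_y_update_decrease_general hρ.ne' (add_pos hρ hβ).ne' hL hdual hs hzp hyp]
  gcongr
  linarith
end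

section
/- Let g : ℝ^{n_x̄} → ℝ be convex and differentiable, let B ∈ ℝ^{m×n_x̄}, w, u ∈ ℝ^m, ρ > 0, and define φ(x̄) = g(x̄) + wᵀ(Bx̄) + (ρ/2)‖Bx̄ + u‖². If x̄⁺ is a global minimizer of φ, then for every x̄ ∈ ℝ^{n_x̄}, φ(x̄⁺) ≤ φ(x̄) − (ρ/2)·‖B(x̄⁺ − x̄)‖². -/
open RealInnerProductSpace

/-!
Subtracting the quadratic form `Q x = (ρ / 2) * ‖B x‖ ^ 2` from `φ` leaves `g` plus an affine map,
which is convex. On the segment from the minimizer `a` to `x`, the function `φ` thus lies below its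
chord by at least `t * (1 - t) * Q (x - a)`; comparing with `φ a`, dividing by `t` and letting
`t → 0` gives the decrease.
-/

section QuadraticGrowth

open Filter Set Topology

theorem quadraticMap_smul_add_smul {R M N : Type*} [CommRing R] [AddCommGroup M] [Module R M]
    [AddCommGroup N] [Module R N] (Q : QuadraticMap R M N) (x y : M) {a b : R} (hab : a + b = 1) :
    Q (a • x + b • y) = a • Q x + b • Q y - (a * b) • Q (x - y) := by
  obtain rfl : b = 1 - a := eq_sub_of_add_eq' hab
  rw [sub_eq_add_neg x y, QuadraticMap.map_add Q, QuadraticMap.map_add Q x, Q.polar_neg_right,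
    Q.map_neg, Q.polar_smul_left, Q.polar_smul_right, Q.map_smul, Q.map_smul]
  module

theorem le_chord_sub_of_convexOn_sub_quadraticForm {R M : Type*} [CommRing R] [PartialOrder R]
    [IsOrderedAddMonoid R] [AddCommGroup M] [Module R M] {s : Set M} {f : M → R}
    {Q : QuadraticForm R M} (hf : ConvexOn R s fun x ↦ f x - Q x) {x y : M} (hx : x ∈ s)
    (hy : y ∈ s) {a b : R} (ha : 0 ≤ a) (hb : 0 ≤ b) (hab : a + b = 1) :
    f (a • x + b • y) ≤ a * f x + b * f y - a * b * Q (x - y) :=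
  calc f (a • x + b • y)
    _ ≤ a * (f x - Q x) + b * (f y - Q y) + Q (a • x + b • y) :=
      sub_le_iff_le_add.1 (hf.2 hx hy ha hb hab)
    _ = a * f x + b * f y - a * b * Q (x - y) := by
      rw [quadraticMap_smul_add_smul Q x y hab]
      simp only [smul_eq_mul]
      ring

theorem add_quadraticForm_le_of_isMinOn {E : Type*} [AddCommGroup E] [Module ℝ E] {s : Set E}
    {f : E → ℝ} {Q : QuadraticForm ℝ E} (hf : ConvexOn ℝ s fun x ↦ f x - Q x) {a x : E}
    (hmin : IsMinOn f s a) (ha : a ∈ s) (hx : x ∈ s) :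
    f a + Q (a - x) ≤ f x := by
  have hsegment : ∀ t ∈ Ioo (0 : ℝ) 1, f a + (1 - t) * Q (a - x) ≤ f x := by
    rintro t ⟨ht₀, ht₁⟩
    have hmem : (1 - t) • a + t • x ∈ s :=
      hf.1 ha hx (sub_nonneg.2 ht₁.le) ht₀.le (sub_add_cancel 1 t)
    have hchord : f a ≤ (1 - t) * f a + t * f x - (1 - t) * t * Q (a - x) :=
      (hmin hmem).trans <| le_chord_sub_of_convexOn_sub_quadraticForm hf ha hx
        (sub_nonneg.2 ht₁.le) ht₀.le (sub_add_cancel 1 t)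
    refine le_of_mul_le_mul_left ?_ ht₀
    linarith
  have hlim : Tendsto (fun t : ℝ ↦ f a + (1 - t) * Q (a - x)) (𝓝[>] 0) (𝓝 (f a + Q (a - x))) :=
    tendsto_nhdsWithin_of_tendsto_nhds <|
      Continuous.tendsto' (by fun_prop) 0 _ (by rw [sub_zero, one_mul])
  exact le_of_tendsto hlim (eventually_of_mem (Ioo_mem_nhdsGT one_pos) hsegment)

end QuadraticGrowth

section LinearPenalty

variable {E F : Type*} [AddCommGroup E] [Module ℝ E] [SeminormedAddCommGroup F]
  [InnerProductSpace ℝ F]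

/-- The quadratic form `x ↦ c * ‖B x‖ ^ 2`, the second-order part of every quadratic penalty
`c * ‖B x + u‖ ^ 2`. It does not depend on the shift `u`, which only contributes affine terms. -/
noncomputable def penaltyForm (c : ℝ) (B : E →ₗ[ℝ] F) : QuadraticForm ℝ E :=
  c • (LinearMap.BilinMap.toQuadraticMap (innerₗ F)).comp B

theorem penaltyForm_apply (c : ℝ) (B : E →ₗ[ℝ] F) (x : E) :
    penaltyForm c B x = c * ‖B x‖ ^ 2 := by
  simp [penaltyForm]

theorem convexOn_add_penalty_sub_penaltyForm {s : Set E} {g : E → ℝ} (hg : ConvexOn ℝ s g)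
    (B : E →ₗ[ℝ] F) (w u : F) (c : ℝ) :
    ConvexOn ℝ s fun x ↦ g x + ⟪w, B x⟫ + c * ‖B x + u‖ ^ 2 - penaltyForm c B x := by
  have hlinear : ConvexOn ℝ s (innerₗ F (w + (2 * c) • u) ∘ₗ B) := LinearMap.convexOn _ hg.1
  refine ((hg.add hlinear).add_const (c * ‖u‖ ^ 2)).congr fun x _ ↦ ?_
  simp only [Pi.add_apply, LinearMap.comp_apply, innerₗ_apply_apply, inner_add_left,
    real_inner_smul_left, penaltyForm_apply, norm_add_sq_real, real_inner_comm u (B x)]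
  ring

theorem xbar_update_decrease_general {s : Set E} {g : E → ℝ} (hg : ConvexOn ℝ s g)
    (B : E →ₗ[ℝ] F) (w u : F) (ρ : ℝ) {φ : E → ℝ}
    (hφ : ∀ x, φ x = g x + ⟪w, B x⟫ + (ρ / 2) * ‖B x + u‖ ^ 2)
    {a x : E} (hmin : IsMinOn φ s a) (ha : a ∈ s) (hx : x ∈ s) :
    φ a ≤ φ x - (ρ / 2) * ‖B (a - x)‖ ^ 2 := by
  obtain rfl := funext hφ
  have hgrowth := add_quadraticForm_le_of_isMinOn
    (convexOn_add_penalty_sub_penaltyForm hg B w u (ρ / 2)) hmin ha hx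
  rw [penaltyForm_apply] at hgrowth
  exact le_sub_iff_add_le.2 hgrowth

end LinearPenalty

/-- If `g` is convex and differentiable and `x̄⁺` is a global minimizer of
`φ(x̄) = g(x̄) + wᵀ(Bx̄) + (ρ/2)‖Bx̄ + u‖²`, then for every `x̄`,
`φ(x̄⁺) ≤ φ(x̄) − (ρ/2)‖B(x̄⁺ − x̄)‖²`. -/
theorem xbar_update_decrease {nxb m : ℕ}
    (g : EuclideanSpace ℝ (Fin nxb) → ℝ)
    (hgconv : ConvexOn ℝ Set.univ g) (hgdiff : Differentiable ℝ g)
    (B : EuclideanSpace ℝ (Fin nxb) →L[ℝ] EuclideanSpace ℝ (Fin m))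
    (w u : EuclideanSpace ℝ (Fin m)) (ρ : ℝ) (hρ : 0 < ρ)
    (φ : EuclideanSpace ℝ (Fin nxb) → ℝ)
    (hφ : ∀ xbar, φ xbar = g xbar + ⟪w, B xbar⟫ + (ρ / 2) * ‖B xbar + u‖ ^ 2)
    (xbarp : EuclideanSpace ℝ (Fin nxb))
    (hmin : ∀ xbar, φ xbarp ≤ φ xbar) :
    ∀ xbar, φ xbarp ≤ φ xbar - (ρ / 2) * ‖B (xbarp - xbar)‖ ^ 2 :=
  fun xbar ↦ xbar_update_decrease_general hgconv B.toLinearMap w u ρ hφ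
    (fun x _ ↦ hmin x) (Set.mem_univ xbarp) (Set.mem_univ xbar)
end

section
/- Let f : ℝ^{n_x} → ℝ and g : ℝ^{n_x̄} → ℝ, and define the augmented Lagrangian L(x, x̄, z, y) = f(x) + g(x̄) + yᵀ(Ax + Bx̄ + z − b) + (ρ/2)‖Ax + Bx̄ + z − b‖² + λᵀz + (β/2)‖z‖², and v(w; λ, β) = λᵀw + (β/2)‖w‖². Suppose ρ ≥ β > 0 and λ + β·z + y = 0. Then L(x, x̄, z, y) ≥ f(x) + g(x̄) + v(−(Ax + Bx̄ − b); λ, β). -/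
open RealInnerProductSpace

/-!
With `r = A x + B x̄ + z - b` one has `-(A x + B x̄ - b) = z - r`. Since `v` is quadratic with
gradient `λ + β z = -y` at `z`, its expansion `v (z - r) = v z + ⟪y, r⟫ + (β / 2) ‖r‖²` is exact.
Hence the two sides of the bound differ by exactly `((ρ - β) / 2) ‖r‖²`.
-/

section AugmentedLagrangian

variable {X Y E : Type*} [SeminormedAddCommGroup E] [InnerProductSpace ℝ E]

/-- The slack-penalty term `v(w; λ, β) = λᵀw + (β/2)‖w‖²` of the relaxed two-level formulation. -/
noncomputable def slackPenalty (lam : E) (β : ℝ) (w : E) : ℝ :=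
  ⟪lam, w⟫ + (β / 2) * ‖w‖ ^ 2

/-- The augmented Lagrangian of `min f x + g x̄ + v(z; λ, β)` subject to `A x + B x̄ + z = b`, with
multiplier `y` and penalty `ρ`. The maps `A` and `B` may be nonlinear. -/
noncomputable def augmentedLagrangian (f : X → ℝ) (g : Y → ℝ) (A : X → E) (B : Y → E)
    (b lam : E) (ρ β : ℝ) (x : X) (xbar : Y) (z y : E) : ℝ :=
  f x + g xbar + ⟪y, A x + B xbar + z - b⟫ + (ρ / 2) * ‖A x + B xbar + z - b‖ ^ 2 +
    slackPenalty lam β z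

theorem slackPenalty_sub (lam : E) (β : ℝ) (z r : E) :
    slackPenalty lam β (z - r) =
      slackPenalty lam β z - ⟪lam + β • z, r⟫ + (β / 2) * ‖r‖ ^ 2 := by
  simp only [slackPenalty, norm_sub_sq_real, inner_sub_right, inner_add_left,
    real_inner_smul_left]
  ring

theorem augmentedLagrangian_eq_of_dual_slack (f : X → ℝ) (g : Y → ℝ) (A : X → E) (B : Y → E)
    (b : E) {lam : E} (ρ : ℝ) {β : ℝ} (x : X) (xbar : Y) {z y : E}
    (hdual : lam + β • z + y = 0) :
    augmentedLagrangian f g A B b lam ρ β x xbar z y =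
      f x + g xbar + slackPenalty lam β (-(A x + B xbar - b)) +
        ((ρ - β) / 2) * ‖A x + B xbar + z - b‖ ^ 2 := by
  have hgrad : lam + β • z = -y := eq_neg_of_add_eq_zero_left hdual
  have hslack : -(A x + B xbar - b) = z - (A x + B xbar + z - b) := by abel
  rw [augmentedLagrangian, hslack, slackPenalty_sub, hgrad, inner_neg_left]
  ring

theorem auglag_lower_bound_via_v_general (f : X → ℝ) (g : Y → ℝ) (A : X → E) (B : Y → E)
    (b : E) {lam : E} {ρ β : ℝ} (hρβ : β ≤ ρ) (x : X) (xbar : Y) {z y : E}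
    (hdual : lam + β • z + y = 0) :
    f x + g xbar + slackPenalty lam β (-(A x + B xbar - b)) ≤
      augmentedLagrangian f g A B b lam ρ β x xbar z y := by
  have hgap : 0 ≤ ((ρ - β) / 2) * ‖A x + B xbar + z - b‖ ^ 2 :=
    mul_nonneg (div_nonneg (sub_nonneg.2 hρβ) zero_le_two) (sq_nonneg _)
  rw [augmentedLagrangian_eq_of_dual_slack f g A B b ρ x xbar hdual]
  exact le_add_of_nonneg_right hgap

end AugmentedLagrangian

/-- Under the dual-slack identity `λ + βz + y = 0` and `ρ ≥ β > 0`, the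
augmented Lagrangian is bounded below by `f(x) + g(x̄) + v(−(Ax + Bx̄ − b))`, where
`v(w) = λᵀw + (β/2)‖w‖²` is the slack-penalty term. -/
theorem auglag_lower_bound_via_v {nx nxb m : ℕ}
    (f : EuclideanSpace ℝ (Fin nx) → ℝ) (g : EuclideanSpace ℝ (Fin nxb) → ℝ)
    (A : EuclideanSpace ℝ (Fin nx) →L[ℝ] EuclideanSpace ℝ (Fin m))
    (B : EuclideanSpace ℝ (Fin nxb) →L[ℝ] EuclideanSpace ℝ (Fin m))
    (b : EuclideanSpace ℝ (Fin m)) (lam : EuclideanSpace ℝ (Fin m))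
    (ρ β : ℝ) (hβ : 0 < β) (hρβ : β ≤ ρ)
    (L : EuclideanSpace ℝ (Fin nx) → EuclideanSpace ℝ (Fin nxb) →
      EuclideanSpace ℝ (Fin m) → EuclideanSpace ℝ (Fin m) → ℝ)
    (hL : ∀ x xbar z y, L x xbar z y =
      f x + g xbar + ⟪y, A x + B xbar + z - b⟫ +
        (ρ / 2) * ‖A x + B xbar + z - b‖ ^ 2 + ⟪lam, z⟫ + (β / 2) * ‖z‖ ^ 2)
    (v : EuclideanSpace ℝ (Fin m) → ℝ)
    (hv : ∀ w, v w = ⟪lam, w⟫ + (β / 2) * ‖w‖ ^ 2)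
    (x : EuclideanSpace ℝ (Fin nx)) (xbar : EuclideanSpace ℝ (Fin nxb))
    (z y : EuclideanSpace ℝ (Fin m))
    (hdual : lam + β • z + y = 0) :
    L x xbar z y ≥ f x + g xbar + v (-(A x + B xbar - b)) := by
  simpa only [hL, hv, augmentedLagrangian, slackPenalty, ← add_assoc] using
    auglag_lower_bound_via_v_general f g A B b hρβ x xbar hdual
end

section
/- Let f : ℝ^{n_x} → ℝ and g : ℝ^{n_x̄} → ℝ be bounded below, say f ≥ f_lb and g ≥ g_lb, and define the augmented Lagrangian L(x, x̄, z, y) = f(x) + g(x̄) + yᵀ(Ax + Bx̄ + z − b) + (ρ/2)‖Ax + Bx̄ + z − b‖² + λᵀz + (β/2)‖z‖². If ρ ≥ β > 0 and λ + β·z + y = 0, then L(x, x̄, z, y) ≥ f_lb + g_lb − ‖λ‖²/(2β). -/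
open RealInnerProductSpace

/-!
Write `r = A x + B xbar + z - b`. The dual-slack identity says that `-y` is the gradient at `z` of
the slack penalty `v ↦ ⟪lam, v⟫ + (β / 2) * ‖v‖ ^ 2`. Expanding this quadratic exactly around `z`,
the terms of the Lagrangian other than `f x + g xbar` equal the slack penalty at
`z - r = b - A x - B xbar`, the slack that makes `x, xbar` feasible, plus
`((ρ - β) / 2) * ‖r‖ ^ 2 ≥ 0`. Completing the square, the slack penalty is at least
`-‖lam‖ ^ 2 / (2 * β)` everywhere.
-/

section InnerProductSpace

variable {E : Type*} [SeminormedAddCommGroup E] [InnerProductSpace ℝ E]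

lemma neg_norm_sq_div_le_inner_add_norm_sq {β : ℝ} (hβ : 0 < β) (u v : E) :
    -(‖u‖ ^ 2 / (2 * β)) ≤ ⟪u, v⟫ + (β / 2) * ‖v‖ ^ 2 := by
  have complete_square :
      ⟪u, v⟫ + (β / 2) * ‖v‖ ^ 2 = ‖u + β • v‖ ^ 2 / (2 * β) - ‖u‖ ^ 2 / (2 * β) := by
    rw [norm_add_sq_real, real_inner_smul_right, norm_smul, mul_pow, Real.norm_eq_abs, sq_abs]
    field_simp
    ring
  have square_nonneg : 0 ≤ ‖u + β • v‖ ^ 2 / (2 * β) := by positivity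
  linarith

lemma penalty_eq_of_dual_slack {lam z y : E} {β : ℝ} (hdual : lam + β • z + y = 0)
    (ρ : ℝ) (r : E) :
    ⟪y, r⟫ + (ρ / 2) * ‖r‖ ^ 2 + ⟪lam, z⟫ + (β / 2) * ‖z‖ ^ 2 =
      ⟪lam, z - r⟫ + (β / 2) * ‖z - r‖ ^ 2 + ((ρ - β) / 2) * ‖r‖ ^ 2 := by
  have inner_dual : ⟪y, r⟫ = -⟪lam, r⟫ - β * ⟪z, r⟫ := by
    rw [eq_neg_of_add_eq_zero_right hdual, inner_neg_left, inner_add_left, real_inner_smul_left]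
    ring
  rw [inner_dual, inner_sub_right, norm_sub_sq_real]
  ring

lemma neg_norm_sq_div_le_penalty {lam z y : E} {ρ β : ℝ} (hβ : 0 < β) (hρβ : β ≤ ρ)
    (hdual : lam + β • z + y = 0) (r : E) :
    -(‖lam‖ ^ 2 / (2 * β)) ≤
      ⟪y, r⟫ + (ρ / 2) * ‖r‖ ^ 2 + ⟪lam, z⟫ + (β / 2) * ‖z‖ ^ 2 := by
  have residual_nonneg : 0 ≤ ((ρ - β) / 2) * ‖r‖ ^ 2 :=
    mul_nonneg (div_nonneg (sub_nonneg.2 hρβ) zero_le_two) (sq_nonneg _)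
  calc -(‖lam‖ ^ 2 / (2 * β))
      ≤ ⟪lam, z - r⟫ + (β / 2) * ‖z - r‖ ^ 2 := neg_norm_sq_div_le_inner_add_norm_sq hβ lam (z - r)
    _ ≤ ⟪lam, z - r⟫ + (β / 2) * ‖z - r‖ ^ 2 + ((ρ - β) / 2) * ‖r‖ ^ 2 :=
      le_add_of_nonneg_right residual_nonneg
    _ = ⟪y, r⟫ + (ρ / 2) * ‖r‖ ^ 2 + ⟪lam, z⟫ + (β / 2) * ‖z‖ ^ 2 :=
      (penalty_eq_of_dual_slack hdual ρ r).symm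

theorem auglag_lower_bound_general {X Y : Type*} {f : X → ℝ} {g : Y → ℝ} {flb glb : ℝ}
    (hf : ∀ x, flb ≤ f x) (hg : ∀ xbar, glb ≤ g xbar) {A : X → E} {B : Y → E} {b lam : E}
    {ρ β : ℝ} (hβ : 0 < β) (hρβ : β ≤ ρ) {L : X → Y → E → E → ℝ}
    (hL : ∀ x xbar z y, L x xbar z y =
      f x + g xbar + ⟪y, A x + B xbar + z - b⟫ +
        (ρ / 2) * ‖A x + B xbar + z - b‖ ^ 2 + ⟪lam, z⟫ + (β / 2) * ‖z‖ ^ 2)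
    (x : X) (xbar : Y) {z y : E} (hdual : lam + β • z + y = 0) :
    flb + glb - ‖lam‖ ^ 2 / (2 * β) ≤ L x xbar z y := by
  have penalty_bound := neg_norm_sq_div_le_penalty hβ hρβ hdual (A x + B xbar + z - b)
  rw [hL]
  linarith [hf x, hg xbar]

end InnerProductSpace

/-- If `f ≥ f_lb`, `g ≥ g_lb`, `ρ ≥ β > 0` and the dual-slack identity
`λ + βz + y = 0` holds, then the augmented Lagrangian is bounded below by
`f_lb + g_lb − ‖λ‖²/(2β)`. -/
theorem auglag_lower_bound {nx nxb m : ℕ}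
    (f : EuclideanSpace ℝ (Fin nx) → ℝ) (g : EuclideanSpace ℝ (Fin nxb) → ℝ)
    (flb glb : ℝ) (hf : ∀ x, flb ≤ f x) (hg : ∀ xbar, glb ≤ g xbar)
    (A : EuclideanSpace ℝ (Fin nx) →L[ℝ] EuclideanSpace ℝ (Fin m))
    (B : EuclideanSpace ℝ (Fin nxb) →L[ℝ] EuclideanSpace ℝ (Fin m))
    (b : EuclideanSpace ℝ (Fin m)) (lam : EuclideanSpace ℝ (Fin m))
    (ρ β : ℝ) (hβ : 0 < β) (hρβ : β ≤ ρ)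
    (L : EuclideanSpace ℝ (Fin nx) → EuclideanSpace ℝ (Fin nxb) →
      EuclideanSpace ℝ (Fin m) → EuclideanSpace ℝ (Fin m) → ℝ)
    (hL : ∀ x xbar z y, L x xbar z y =
      f x + g xbar + ⟪y, A x + B xbar + z - b⟫ +
        (ρ / 2) * ‖A x + B xbar + z - b‖ ^ 2 + ⟪lam, z⟫ + (β / 2) * ‖z‖ ^ 2)
    (x : EuclideanSpace ℝ (Fin nx)) (xbar : EuclideanSpace ℝ (Fin nxb))
    (z y : EuclideanSpace ℝ (Fin m))
    (hdual : lam + β • z + y = 0) :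
    L x xbar z y ≥ flb + glb - ‖lam‖ ^ 2 / (2 * β) :=
  auglag_lower_bound_general hf hg hβ hρβ hL x xbar hdual
end
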